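/- Let n ≥ 2 and let E = EuclideanSpace ℝ n. Denote by μ^{n-1} the (n-1)-dimensional Hausdorff measure and by μ^{n-2} the (n-2)-dimensional Hausdorff measure on E. Then for every continuous function f : E × E → ℝ, the iterated integrals over the Stiefel manifold of orthonormal 2-frames agree in either order: ∫_{u ∈ S} ( ∫_{v ∈ S, ⟪u,v⟫ = 0} f(u,v) dμ^{n-2}(v) ) dμ^{n-1}(u) = ∫_{v ∈ S} ( ∫_{u ∈ S, ⟪u,v⟫ = 0} f(u,v) dμ^{n-2}(u) ) dμ^{n-1}(v), where S = {w ∈ E : ‖w‖ = 1} is the unit sphere and ⟪·,·⟫ is the standard inner product. -/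

import Mathlib

open MeasureTheory
open scoped RealInnerProductSpace

/-!
Integrating over the great subsphere orthogonal to `u`, and then over `u` in the unit sphere,
defines a finite measure on `E × E`. It is invariant under the diagonal action of the compact group
`O(E)` and concentrated on the set of orthonormal 2-frames, which is a single orbit. Averaging over
the Haar measure of `O(E)` shows that an invariant measure on a single orbit is determined by its
total mass. Exchanging the two coordinates preserves invariance, the orbit and the total mass, so it
preserves the measure, and the two iterated integrals agree.
-/

open Metric Module Topology ProbabilityTheory MulAction
open scoped ENNReal

section InvariantMeasures

variable {G X Y : Type*} [Group G] [MulAction G X] [MulAction G Y]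
  [MeasurableSpace X] [MeasurableSpace Y]

theorem map_smul_restrict_preimage_smul [MeasurableConstSMul G X] (μ : Measure X)
    [SMulInvariantMeasure G X μ] (g : G) {s : Set X} (hs : MeasurableSet s) :
    (μ.restrict ((g • ·) ⁻¹' s)).map (g • ·) = μ.restrict s :=
  ((measurePreserving_smul g μ).restrict_preimage hs).map_eq

theorem smulInvariantMeasure_compProd [MeasurableConstSMul G X] [MeasurableConstSMul G Y]
    (μ : Measure X) [SFinite μ] [SMulInvariantMeasure G X μ] (κ : Kernel X Y) [IsSFiniteKernel κ]
    (hκ : ∀ (g : G) x, κ (g • x) = (κ x).map (g • ·)) :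
    SMulInvariantMeasure G (X × Y) (μ ⊗ₘ κ) where
  measure_preimage_smul g A hA := by
    have hdiag : Measurable fun p : X × Y ↦ g • p :=
      (measurable_fst.const_smul g).prodMk (measurable_snd.const_smul g)
    have hsection (x : X) :
        κ x (Prod.mk x ⁻¹' ((g • ·) ⁻¹' A)) = κ (g • x) (Prod.mk (g • x) ⁻¹' A) := by
      rw [hκ, Measure.map_apply (measurable_const_smul g) (measurable_prodMk_left hA)]
      rfl
    rw [Measure.compProd_apply (hdiag hA), Measure.compProd_apply hA]
    simp only [hsection]
    exact (measurePreserving_smul g μ).lintegral_comp (Kernel.measurable_kernel_prodMk_left hA)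

variable [MeasurableSpace G] [MeasurableSMul₂ G X]

theorem measurable_map_smul (μ : Measure X) [SFinite μ] :
    Measurable fun g : G ↦ μ.map (g • ·) := by
  refine Measure.measurable_of_measurable_coe _ fun A hA ↦ ?_
  simp only [Measure.map_apply (measurable_const_smul _) hA]
  exact measurable_measure_prodMk_left (measurable_smul hA)

-- Average `μ (g • A) = μ A` over `g` and exchange the integrals over `G` and `X`.
theorem measure_eq_mul_of_ae_mem_orbit [MeasurableMul G] [MeasurableInv G]
    (m : Measure G) [IsProbabilityMeasure m] [m.IsMulLeftInvariant]
    (μ : Measure X) [SFinite μ] [SMulInvariantMeasure G X μ] {a : X}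
    (ha : ∀ᵐ x ∂μ, x ∈ orbit G a) {A : Set X} (hA : MeasurableSet A) :
    μ A = μ Set.univ * m {g | g⁻¹ • a ∈ A} := by
  have hsmul : MeasurableSet {p : G × X | p.1⁻¹ • p.2 ∈ A} :=
    (measurable_fst.inv.smul measurable_snd) hA
  have hfiber : ∀ x ∈ orbit G a, m {g | g⁻¹ • x ∈ A} = m {g | g⁻¹ • a ∈ A} := by
    rintro _ ⟨k, rfl⟩
    rw [← measure_preimage_mul m k⁻¹ {g | g⁻¹ • a ∈ A}]
    simp [Set.preimage, mul_smul]
  calc μ A = ∫⁻ _, μ A ∂m := by simp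
    _ = ∫⁻ g, μ {x | g⁻¹ • x ∈ A} ∂m :=
      lintegral_congr fun g ↦ (measure_preimage_smul μ g⁻¹ A).symm
    _ = m.prod μ {p | p.1⁻¹ • p.2 ∈ A} := (Measure.prod_apply hsmul).symm
    _ = ∫⁻ x, m {g | g⁻¹ • x ∈ A} ∂μ := Measure.prod_apply_symm hsmul
    _ = ∫⁻ _, m {g | g⁻¹ • a ∈ A} ∂μ := lintegral_congr_ae (ha.mono hfiber)
    _ = μ Set.univ * m {g | g⁻¹ • a ∈ A} := by rw [lintegral_const, mul_comm]

theorem measure_eq_of_smulInvariant_of_subset_orbit [TopologicalSpace G] [IsTopologicalGroup G]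
    [CompactSpace G] [BorelSpace G] {μ ν : Measure X} [SFinite μ] [SFinite ν]
    [SMulInvariantMeasure G X μ] [SMulInvariantMeasure G X ν] {s : Set X}
    (hs : ∀ x ∈ s, s ⊆ orbit G x) (hμ : ∀ᵐ x ∂μ, x ∈ s) (hν : ∀ᵐ x ∂ν, x ∈ s)
    (huniv : μ Set.univ = ν Set.univ) : μ = ν := by
  rcases s.eq_empty_or_nonempty with rfl | ⟨a, ha⟩
  · have hzero {ρ : Measure X} (hρ : ∀ᵐ x ∂ρ, x ∈ (∅ : Set X)) : ρ = 0 := by simpa using hρ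
    rw [hzero hμ, hzero hν]
  · let m : Measure G := Measure.haarMeasure ⊤
    have : IsProbabilityMeasure m := ⟨Measure.haarMeasure_self⟩
    ext A hA
    rw [measure_eq_mul_of_ae_mem_orbit m μ (hμ.mono (hs a ha)) hA,
      measure_eq_mul_of_ae_mem_orbit m ν (hν.mono (hs a ha)) hA, huniv]

end InvariantMeasures

section HausdorffMeasureSphere

theorem exists_mem_nhds_hausdorffMeasure_image_lt_top {E F : Type*}
    [NormedAddCommGroup E] [NormedSpace ℝ E] [FiniteDimensional ℝ E]
    [MeasurableSpace E] [BorelSpace E]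
    [NormedAddCommGroup F] [NormedSpace ℝ F] [MeasurableSpace F] [BorelSpace F]
    {f : E → F} {x : E} (hf : ContDiffAt ℝ 1 f x) :
    ∃ U ∈ 𝓝 x, μH[finrank ℝ E] (f '' U) < ∞ := by
  obtain ⟨K, U, hU, hK⟩ := hf.exists_lipschitzOnWith
  refine ⟨U ∩ closedBall x 1, Filter.inter_mem hU (closedBall_mem_nhds x one_pos), ?_⟩
  have : (μH[finrank ℝ E] : Measure E).IsAddHaarMeasure := isAddHaarMeasure_hausdorffMeasure
  have hball : μH[finrank ℝ E] (U ∩ closedBall x 1) < ∞ :=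
    (measure_mono Set.inter_subset_right).trans_lt (isCompact_closedBall x 1).measure_lt_top
  exact ((hK.mono Set.inter_subset_left).hausdorffMeasure_image_le (by positivity)).trans_lt
    (ENNReal.mul_lt_top (by simp) hball)

variable {E : Type*} [NormedAddCommGroup E] [InnerProductSpace ℝ E]

theorem image_stereoInvFunAux_mem_nhdsWithin_sphere {v : E} (hv : ‖v‖ = 1)
    {U : Set (ℝ ∙ v)ᗮ} (hU : U ∈ 𝓝 0) :
    (fun w : (ℝ ∙ v)ᗮ ↦ stereoInvFunAux v w) '' U ∈ 𝓝[sphere 0 1] (-v) := by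
  have himage := (isOpenEmbedding_stereographic_symm hv).isOpenMap.image_mem_nhds hU
  have hsouth : (stereographic hv).symm 0 = ⟨-v, by simpa using hv⟩ := by
    ext
    change stereoInvFunAux v _ = -v
    simp [stereoInvFunAux]
  rw [hsouth] at himage
  have hval := Filter.image_mem_map (m := ((↑) : sphere (0 : E) 1 → E)) himage
  rw [map_nhds_subtype_val, Set.image_image] at hval
  exact hval

variable [FiniteDimensional ℝ E]

theorem cast_finrank_orthogonal_span_singleton {v : E} (hv : v ≠ 0) :
    (finrank ℝ (ℝ ∙ v)ᗮ : ℝ) = finrank ℝ E - 1 := by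
  rw [eq_sub_iff_add_eq', ← (ℝ ∙ v).finrank_add_finrank_orthogonal, finrank_span_singleton hv]
  norm_cast

variable [MeasurableSpace E] [BorelSpace E]

variable (E) in
theorem hausdorffMeasure_sphere_lt_top : μH[(finrank ℝ E : ℝ) - 1] (sphere (0 : E) 1) < ∞ := by
  refine (isCompact_sphere (0 : E) 1).measure_lt_top_of_nhdsWithin fun x hx ↦ ?_
  have hv : ‖-x‖ = 1 := by simpa using hx
  have hsmooth : ContDiff ℝ 1 fun w : (ℝ ∙ (-x))ᗮ ↦ stereoInvFunAux (-x) (w : E) :=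
    contDiff_stereoInvFunAux.comp (ℝ ∙ (-x))ᗮ.subtypeL.contDiff
  obtain ⟨U, hU, hfin⟩ :=
    exists_mem_nhds_hausdorffMeasure_image_lt_top (hsmooth.contDiffAt (x := 0))
  have himage := image_stereoInvFunAux_mem_nhdsWithin_sphere hv hU
  rw [neg_neg] at himage
  rw [cast_finrank_orthogonal_span_singleton (norm_ne_zero_iff.1 (by simp [hv]))] at hfin
  exact ⟨_, himage, hfin⟩

end HausdorffMeasureSphere

section OrthogonalGroup

variable (E : Type*) [NormedAddCommGroup E] [InnerProductSpace ℝ E] [CompleteSpace E]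

/-- The orthogonal group of a real Hilbert space, as the topological group of unitary operators. -/
noncomputable abbrev OrthogonalGroup : Submonoid (E →L[ℝ] E) :=
  unitary (E →L[ℝ] E)

namespace OrthogonalGroup

instance : ContinuousSMul (OrthogonalGroup E) E where
  continuous_smul := by
    change Continuous fun p : OrthogonalGroup E × E ↦ (p.1 : E →L[ℝ] E) p.2
    fun_prop

instance : IsIsometricSMul (OrthogonalGroup E) E where
  isometry_smul g := (Unitary.linearIsometryEquiv g).isometry

instance [FiniteDimensional ℝ E] : CompactSpace (OrthogonalGroup E) := by
  refine isCompact_iff_compactSpace.1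
    (isCompact_of_isClosed_isBounded isClosed_unitary (isBounded_iff_forall_norm_le.2 ⟨1, ?_⟩))
  intro T hT
  exact T.opNorm_le_bound zero_le_one fun x ↦ by rw [T.norm_map_of_mem_unitary hT, one_mul]

variable {E}

theorem norm_smul (g : OrthogonalGroup E) (x : E) : ‖g • x‖ = ‖x‖ :=
  Unitary.norm_map g x

theorem inner_smul_smul (g : OrthogonalGroup E) (x y : E) : ⟪g • x, g • y⟫ = ⟪x, y⟫ :=
  Unitary.inner_map_map g x y

theorem exists_smul_eq_and_fixed_of_norm_eq {x y : E} (h : ‖x‖ = ‖y‖) :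
    ∃ g : OrthogonalGroup E, g • x = y ∧ ∀ z, ⟪x - y, z⟫ = 0 → g • z = z := by
  refine ⟨Unitary.linearIsometryEquiv.symm (ℝ ∙ (x - y))ᗮ.reflection, ?_, fun z hz ↦ ?_⟩
  · exact Submodule.reflection_sub h
  · exact Submodule.reflection_mem_subspace_eq_self
      (Submodule.mem_orthogonal_singleton_iff_inner_right.2 hz)

theorem orbit_eq_sphere (x : E) : orbit (OrthogonalGroup E) x = sphere 0 ‖x‖ := by
  ext y
  rw [mem_sphere_zero_iff_norm]
  constructor
  · rintro ⟨g, rfl⟩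
    exact norm_smul g x
  · intro h
    obtain ⟨g, hg, -⟩ := exists_smul_eq_and_fixed_of_norm_eq h.symm
    exact ⟨g, hg⟩

-- Once the first vectors agree, a reflection fixing that vector matches the second ones.
theorem mem_orbit_prod {x y x' y' : E} (hx : ‖x'‖ = ‖x‖) (hy : ‖y'‖ = ‖y‖)
    (hxy : ⟪x', y'⟫ = ⟪x, y⟫) : (x', y') ∈ orbit (OrthogonalGroup E) (x, y) := by
  obtain ⟨g, hgx, -⟩ := exists_smul_eq_and_fixed_of_norm_eq hx.symm
  obtain ⟨k, hky, hk⟩ := exists_smul_eq_and_fixed_of_norm_eq ((norm_smul g y).trans hy.symm)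
  have hfix : k • x' = x' := hk x' <| by
    rw [inner_sub_left, real_inner_comm, real_inner_comm x' y', hxy, ← hgx, inner_smul_smul,
      sub_self]
  exact ⟨k * g, by simp only [Prod.smul_mk, mul_smul, hgx, hky, hfix]⟩

end OrthogonalGroup

end OrthogonalGroup

section Stiefel

variable {E : Type*} [NormedAddCommGroup E] [InnerProductSpace ℝ E]

/-- The great subsphere of unit vectors orthogonal to `u`. -/
def greatSubsphere (u : E) : Set E :=
  {v | ‖v‖ = 1 ∧ ⟪u, v⟫ = 0}

theorem isClosed_greatSubsphere (u : E) : IsClosed (greatSubsphere u) :=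
  (isClosed_eq continuous_norm continuous_const).inter
    (isClosed_eq (by fun_prop) continuous_const)

theorem greatSubsphere_eq_image_sphere (u : E) :
    greatSubsphere u = (↑) '' sphere (0 : (ℝ ∙ u)ᗮ) 1 := by
  ext v
  constructor
  · rintro ⟨hv, huv⟩
    exact ⟨⟨v, Submodule.mem_orthogonal_singleton_iff_inner_right.2 huv⟩, by simpa using hv, rfl⟩
  · rintro ⟨w, hw, rfl⟩
    exact ⟨by simpa using hw, Submodule.mem_orthogonal_singleton_iff_inner_right.1 w.2⟩

theorem preimage_smul_greatSubsphere [CompleteSpace E] (g : OrthogonalGroup E) (u : E) :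
    (g • ·) ⁻¹' greatSubsphere (g • u) = greatSubsphere u := by
  ext v
  simp only [greatSubsphere, Set.mem_preimage, Set.mem_ofPred_eq, OrthogonalGroup.norm_smul,
    OrthogonalGroup.inner_smul_smul]

variable (E) in
/-- The Stiefel manifold of orthonormal 2-frames, as a subset of `E × E`. -/
def stiefelManifold : Set (E × E) :=
  {p | ‖p.1‖ = 1 ∧ ‖p.2‖ = 1 ∧ ⟪p.1, p.2⟫ = 0}

theorem isClosed_stiefelManifold : IsClosed (stiefelManifold E) :=
  (isClosed_eq (by fun_prop) continuous_const).inter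
    ((isClosed_eq (by fun_prop) continuous_const).inter
      (isClosed_eq (by fun_prop) continuous_const))

theorem swap_mem_stiefelManifold {p : E × E} (hp : p ∈ stiefelManifold E) :
    p.swap ∈ stiefelManifold E :=
  ⟨hp.2.1, hp.1, (real_inner_comm _ _).trans hp.2.2⟩

theorem stiefelManifold_subset_orbit [CompleteSpace E] {p : E × E} (hp : p ∈ stiefelManifold E) :
    stiefelManifold E ⊆ orbit (OrthogonalGroup E) p :=
  fun _ hq ↦ OrthogonalGroup.mem_orbit_prod (hq.1.trans hp.1.symm)
    (hq.2.1.trans hp.2.1.symm) (hq.2.2.trans hp.2.2.symm)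

theorem isCompact_stiefelManifold [FiniteDimensional ℝ E] : IsCompact (stiefelManifold E) := by
  refine ((isCompact_sphere (0 : E) 1).prod (isCompact_sphere (0 : E) 1)).of_isClosed_subset
    isClosed_stiefelManifold fun p hp ↦ ⟨?_, ?_⟩
  · simpa using hp.1
  · simpa using hp.2.1

variable [MeasurableSpace E] [BorelSpace E]

/-- The volume measure of the great subsphere orthogonal to `u`, as a measure on `E`. -/
noncomputable def greatSubsphereMeasure (u : E) : Measure E :=
  μH[(finrank ℝ E : ℝ) - 2].restrict (greatSubsphere u)

theorem greatSubsphereMeasure_smul [CompleteSpace E] (g : OrthogonalGroup E) (u : E) :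
    greatSubsphereMeasure (g • u) = (greatSubsphereMeasure u).map (g • ·) := by
  rw [greatSubsphereMeasure, greatSubsphereMeasure, ← preimage_smul_greatSubsphere g u,
    map_smul_restrict_preimage_smul _ g (isClosed_greatSubsphere _).measurableSet]

variable [FiniteDimensional ℝ E]

theorem hausdorffMeasure_greatSubsphere_lt_top {u : E} (hu : u ≠ 0) :
    μH[(finrank ℝ E : ℝ) - 2] (greatSubsphere u) < ∞ := by
  have hdim : (finrank ℝ (ℝ ∙ u)ᗮ : ℝ) - 1 = finrank ℝ E - 2 := by
    rw [cast_finrank_orthogonal_span_singleton hu]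
    ring
  rw [greatSubsphere_eq_image_sphere, ← hdim]
  rcases subsingleton_or_nontrivial (ℝ ∙ u)ᗮ with h | h
  · simp [sphere_eq_empty_of_subsingleton one_ne_zero]
  · have hnonneg : (0 : ℝ) ≤ finrank ℝ (ℝ ∙ u)ᗮ - 1 :=
      sub_nonneg.2 (mod_cast finrank_pos (R := ℝ) (M := (ℝ ∙ u)ᗮ))
    exact ((ℝ ∙ u)ᗮ.subtypeₗᵢ.isometry.hausdorffMeasure_image (Or.inl hnonneg) _).trans_lt
      (hausdorffMeasure_sphere_lt_top _)

theorem isFiniteMeasure_greatSubsphereMeasure {u : E} (hu : u ≠ 0) :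
    IsFiniteMeasure (greatSubsphereMeasure u) :=
  isFiniteMeasure_restrict.2 (hausdorffMeasure_greatSubsphere_lt_top hu).ne

-- Measurability descends from the orthogonal group along the Borel surjection `g ↦ g • a`.
theorem measurable_domRestrict_greatSubsphereMeasure :
    Measurable ((sphere (0 : E) 1).domRestrict greatSubsphereMeasure) := by
  rcases (sphere (0 : E) 1).eq_empty_or_nonempty with hempty | ⟨a, ha⟩
  · have := Set.isEmpty_coe_sort.2 hempty
    exact measurable_of_empty _
  · have := isFiniteMeasure_greatSubsphereMeasure (ne_of_mem_sphere ha one_ne_zero)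
    have hrange : Set.range (fun g : OrthogonalGroup E ↦ g • a) = sphere 0 1 := by
      rw [← mem_sphere_zero_iff_norm.1 ha]
      exact OrthogonalGroup.orbit_eq_sphere a
    have horbit : Measurable fun g : OrthogonalGroup E ↦ g • a := measurable_id.smul_const a
    rw [← hrange, ← horbit.measurable_comp_iff_restrict]
    simp only [Function.comp_def, greatSubsphereMeasure_smul]
    exact measurable_map_smul (greatSubsphereMeasure a)

variable (E) in
/-- The kernel sending a unit vector `u` to the volume measure of the great subsphere orthogonal
to `u`. It vanishes off the unit sphere, so as to be a finite kernel: at `u = 0` the great subsphere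
would be the whole unit sphere, of infinite measure in the codimension at hand. -/
noncomputable def greatSubsphereKernel : Kernel E E where
  toFun := (sphere 0 1).indicator greatSubsphereMeasure
  measurable' := by
    refine measurable_of_restrict_of_restrict_compl
      (isClosed_sphere (x := (0 : E)) (ε := 1)).measurableSet ?_ ?_
    · rw [Set.domRestrict_eq_domRestrict_iff.2 Set.eqOn_indicator]
      exact measurable_domRestrict_greatSubsphereMeasure
    · have hzero : (sphere 0 1)ᶜ.domRestrict ((sphere 0 1).indicator greatSubsphereMeasure) =
          fun _ ↦ (0 : Measure E) := funext fun u ↦ Set.indicator_of_notMem u.2 _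
      rw [hzero]
      exact measurable_const

theorem greatSubsphereKernel_of_mem {u : E} (hu : u ∈ sphere 0 1) :
    greatSubsphereKernel E u = greatSubsphereMeasure u :=
  Set.indicator_of_mem hu _

theorem greatSubsphereKernel_of_notMem {u : E} (hu : u ∉ sphere 0 1) :
    greatSubsphereKernel E u = 0 :=
  Set.indicator_of_notMem hu _

theorem greatSubsphereKernel_smul (g : OrthogonalGroup E) (u : E) :
    greatSubsphereKernel E (g • u) = (greatSubsphereKernel E u).map (g • ·) := by
  have hmem : g • u ∈ sphere (0 : E) 1 ↔ u ∈ sphere (0 : E) 1 := by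
    simp only [mem_sphere_zero_iff_norm, OrthogonalGroup.norm_smul]
  by_cases hu : u ∈ sphere (0 : E) 1
  · rw [greatSubsphereKernel_of_mem hu, greatSubsphereKernel_of_mem (hmem.2 hu),
      greatSubsphereMeasure_smul]
  · rw [greatSubsphereKernel_of_notMem hu, greatSubsphereKernel_of_notMem (mt hmem.1 hu),
      Measure.map_zero]

instance : IsFiniteKernel (greatSubsphereKernel E) := by
  rcases (sphere (0 : E) 1).eq_empty_or_nonempty with hempty | ⟨a, ha⟩
  · refine ⟨0, ENNReal.zero_lt_top, fun u ↦ ?_⟩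
    rw [greatSubsphereKernel_of_notMem (hempty ▸ Set.notMem_empty u)]
    simp
  · have := isFiniteMeasure_greatSubsphereMeasure (ne_of_mem_sphere ha one_ne_zero)
    refine ⟨greatSubsphereMeasure a Set.univ, measure_lt_top _ _, fun u ↦ ?_⟩
    by_cases hu : u ∈ sphere (0 : E) 1
    · obtain ⟨g, rfl⟩ : u ∈ orbit (OrthogonalGroup E) a := by
        rwa [OrthogonalGroup.orbit_eq_sphere, mem_sphere_zero_iff_norm.1 ha]
      rw [greatSubsphereKernel_smul, greatSubsphereKernel_of_mem ha,
        Measure.map_apply (measurable_const_smul g) .univ, Set.preimage_univ]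
    · simp [greatSubsphereKernel_of_notMem hu]

variable (E) in
/-- The volume measure of the unit sphere, as a measure on `E`. -/
noncomputable def sphereMeasure : Measure E :=
  μH[(finrank ℝ E : ℝ) - 1].restrict (sphere 0 1)

instance : IsFiniteMeasure (sphereMeasure E) :=
  isFiniteMeasure_restrict.2 (hausdorffMeasure_sphere_lt_top E).ne

instance : SMulInvariantMeasure (OrthogonalGroup E) E (sphereMeasure E) where
  measure_preimage_smul g A hA := by
    have hsphere : (g • ·) ⁻¹' sphere (0 : E) 1 = sphere 0 1 := by
      ext x
      simp only [Set.mem_preimage, mem_sphere_zero_iff_norm, OrthogonalGroup.norm_smul]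
    have hmap : (sphereMeasure E).map (g • ·) = sphereMeasure E := by
      simpa only [sphereMeasure, hsphere] using
        map_smul_restrict_preimage_smul μH[(finrank ℝ E : ℝ) - 1] g
          (isClosed_sphere (x := (0 : E)) (ε := 1)).measurableSet
    rw [← Measure.map_apply (measurable_const_smul g) hA, hmap]

variable (E) in
/-- The measure on orthonormal 2-frames `(u, v)` obtained by integrating first over the great
subsphere of all `v` orthogonal to `u`, then over all `u` in the unit sphere. -/
noncomputable def stiefelMeasure : Measure (E × E) :=
  sphereMeasure E ⊗ₘ greatSubsphereKernel E

instance : IsFiniteMeasure (stiefelMeasure E) :=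
  inferInstanceAs (IsFiniteMeasure (sphereMeasure E ⊗ₘ greatSubsphereKernel E))

instance :
    SMulInvariantMeasure (OrthogonalGroup E) (E × E) (stiefelMeasure E) :=
  smulInvariantMeasure_compProd _ _ greatSubsphereKernel_smul

theorem ae_mem_stiefelManifold : ∀ᵐ p ∂stiefelMeasure E, p ∈ stiefelManifold E := by
  rw [stiefelMeasure, Measure.ae_compProd_iff (p := (· ∈ stiefelManifold E))
    isClosed_stiefelManifold.measurableSet]
  filter_upwards [ae_restrict_mem isClosed_sphere.measurableSet] with u hu
  rw [greatSubsphereKernel_of_mem hu]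
  filter_upwards [ae_restrict_mem (isClosed_greatSubsphere u).measurableSet] with v hv
  exact ⟨mem_sphere_zero_iff_norm.1 hu, hv⟩

theorem map_swap_stiefelMeasure : (stiefelMeasure E).map Prod.swap = stiefelMeasure E := by
  have : SMulInvariantMeasure (OrthogonalGroup E) (E × E) ((stiefelMeasure E).map Prod.swap) :=
    smulInvariantMeasure_map _ _ (fun _ _ ↦ rfl) measurable_swap
  refine measure_eq_of_smulInvariant_of_subset_orbit (G := OrthogonalGroup E)
    (fun _ ↦ stiefelManifold_subset_orbit) ?_ ae_mem_stiefelManifold ?_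
  · rw [ae_map_iff (p := (· ∈ stiefelManifold E)) measurable_swap.aemeasurable
      isClosed_stiefelManifold.measurableSet]
    exact ae_mem_stiefelManifold.mono fun _ ↦ swap_mem_stiefelManifold
  · rw [Measure.map_apply measurable_swap .univ, Set.preimage_univ]

variable {F : Type*} [NormedAddCommGroup F] {f : E × E → F}

theorem integrable_stiefelMeasure_of_continuousOn (hf : ContinuousOn f (stiefelManifold E)) :
    Integrable f (stiefelMeasure E) := by
  rw [← Measure.restrict_eq_self_of_ae_mem (ae_mem_stiefelManifold (E := E))]
  exact hf.integrableOn_compact isCompact_stiefelManifold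

variable [NormedSpace ℝ F]

theorem integral_stiefelMeasure (hf : Integrable f (stiefelMeasure E)) :
    ∫ p, f p ∂stiefelMeasure E =
      ∫ u in {w : E | ‖w‖ = 1}, ∫ v in {w : E | ‖w‖ = 1 ∧ ⟪u, w⟫ = 0}, f (u, v)
        ∂μH[(finrank ℝ E : ℝ) - 2] ∂μH[(finrank ℝ E : ℝ) - 1] := by
  have hsphere : {w : E | ‖w‖ = 1} = sphere 0 1 := by
    ext
    simp
  rw [hsphere]
  refine (Measure.integral_compProd hf).trans
    (setIntegral_congr_fun isClosed_sphere.measurableSet fun u hu ↦ ?_)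
  rw [greatSubsphereKernel_of_mem hu, greatSubsphereMeasure, greatSubsphere]

theorem stiefel_fubini_general (hf : Integrable f (stiefelMeasure E)) :
    ∫ u in {w : E | ‖w‖ = 1}, (∫ v in {w : E | ‖w‖ = 1 ∧ ⟪u, w⟫ = 0}, f (u, v)
        ∂μH[(finrank ℝ E : ℝ) - 2]) ∂μH[(finrank ℝ E : ℝ) - 1]
    = ∫ v in {w : E | ‖w‖ = 1}, (∫ u in {w : E | ‖w‖ = 1 ∧ ⟪w, v⟫ = 0}, f (u, v)
        ∂μH[(finrank ℝ E : ℝ) - 2]) ∂μH[(finrank ℝ E : ℝ) - 1] := by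
  have hswap : MeasurePreserving Prod.swap (stiefelMeasure E) (stiefelMeasure E) :=
    ⟨measurable_swap, map_swap_stiefelMeasure⟩
  have hfswap : Integrable (f ∘ Prod.swap) (stiefelMeasure E) :=
    hswap.integrable_comp_of_integrable hf
  rw [← integral_stiefelMeasure hf,
    ← hswap.integral_comp MeasurableEquiv.prodComm.measurableEmbedding f]
  simpa only [Function.comp_apply, Prod.swap_prod_mk, real_inner_comm] using
    integral_stiefelMeasure hfswap

end Stiefel

/-- **Fubini-type formula on the Stiefel manifold of orthonormal 2-frames.**
For a continuous function `f` on `E × E` (`E = EuclideanSpace ℝ (Fin n)`, `n ≥ 2`),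
the iterated integrals over the unit sphere (w.r.t. the `(n-1)`-dimensional Hausdorff
measure) and over the great subsphere orthogonal to the outer variable
(w.r.t. the `(n-2)`-dimensional Hausdorff measure) agree in either order. -/
theorem stiefel_fubini (n : ℕ) (hn : 2 ≤ n)
    (f : EuclideanSpace ℝ (Fin n) × EuclideanSpace ℝ (Fin n) → ℝ)
    (hf : Continuous f) :
    ∫ u in {w : EuclideanSpace ℝ (Fin n) | ‖w‖ = 1},
      (∫ v in {w : EuclideanSpace ℝ (Fin n) | ‖w‖ = 1 ∧ ⟪u, w⟫ = 0}, f (u, v)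
        ∂(μH[(n : ℝ) - 2])) ∂(μH[(n : ℝ) - 1])
    = ∫ v in {w : EuclideanSpace ℝ (Fin n) | ‖w‖ = 1},
      (∫ u in {w : EuclideanSpace ℝ (Fin n) | ‖w‖ = 1 ∧ ⟪w, v⟫ = 0}, f (u, v)
        ∂(μH[(n : ℝ) - 2])) ∂(μH[(n : ℝ) - 1]) := by
  simpa only [finrank_euclideanSpace_fin] using
    stiefel_fubini_general (integrable_stiefelMeasure_of_continuousOn hf.continuousOn)
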